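/- Let G be a connected unicyclic graph such that J_G is unmixed. Then G = C_l ∪ (P_1 ∪ ⋯ ∪ P_r) for some 0 ≤ r ≤ l, where C_l is a cycle of length l, each P_i is a path graph with |V(P_i) ∩ V(C_l)| = 1, and |V(P_i) ∩ V(P_j)| = 0 for all i ≠ j. -/

import Mathlib

open MvPolynomial

noncomputable section

/-- The binomial edge ideal of a simple graph `G` on vertex type `V`, inside the
polynomial ring `K[x_i, y_i : i ∈ V]`, modelled as `MvPolynomial (V ⊕ V) K`
with `x_i = X (Sum.inl i)` and `y_i = X (Sum.inr i)`. -/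
def binomialEdgeIdeal (K : Type*) [Field K] {V : Type*} (G : SimpleGraph V) :
    Ideal (MvPolynomial (V ⊕ V) K) :=
  Ideal.span { f | ∃ i j : V, G.Adj i j ∧
    f = X (Sum.inl i) * X (Sum.inr j) - X (Sum.inl j) * X (Sum.inr i) }

/-- The minimal number of generators of an ideal. -/
def mu {R : Type*} [CommRing R] (J : Ideal R) : ℕ :=
  sInf {k | ∃ s : Finset R, s.card = k ∧ Ideal.span (s : Set R) = J}

/-- The height of an ideal: the infimum of the heights of the primes containing it. -/
def htI {R : Type*} [CommRing R] (I : Ideal R) : ℕ∞ :=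
  ⨅ (P : PrimeSpectrum R) (_ : I ≤ P.asIdeal), Order.height P

/-- An ideal is unmixed if all of its minimal primes have height equal to its height. -/
def IsUnmixed {R : Type*} [CommRing R] (I : Ideal R) : Prop :=
  ∀ P ∈ I.minimalPrimes, htI P = htI I

/-- The depth of a ring `R` with respect to an ideal `m`: the supremum of the
lengths of regular sequences on `R` consisting of elements of `m`. -/
def ringDepth (R : Type*) [CommRing R] (m : Ideal R) : ℕ∞ :=
  sSup {d : ℕ∞ | ∃ l : List R, (l.length : ℕ∞) = d ∧ (∀ x ∈ l, x ∈ m) ∧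
    RingTheory.Sequence.IsRegular R l}

/-- The graded maximal ideal of the quotient of a polynomial ring by an ideal `J`:
the image of the ideal generated by all the variables. -/
def gradedMaxQuot {K σ : Type*} [Field K] (J : Ideal (MvPolynomial σ K)) :
    Ideal (MvPolynomial σ K ⧸ J) :=
  (Ideal.span (Set.range (X : σ → MvPolynomial σ K))).map (Ideal.Quotient.mk J)

/-- `S/J` is Cohen–Macaulay: its depth with respect to the graded maximal ideal
equals its Krull dimension. -/
def IsCMQuot {K σ : Type*} [Field K] (J : Ideal (MvPolynomial σ K)) : Prop :=
  (ringDepth (MvPolynomial σ K ⧸ J) (gradedMaxQuot J) : WithBot ℕ∞) =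
    ringKrullDim (MvPolynomial σ K ⧸ J)

/-- A graph is a path graph if its vertices can be ordered `v_1, …, v_m` so that
its edges are exactly `{v_i, v_{i+1}}` for `1 ≤ i ≤ m - 1`. -/
def IsPathGraph {V : Type*} (H : SimpleGraph V) : Prop :=
  ∃ (m : ℕ) (e : V ≃ Fin m), ∀ a b : V,
    H.Adj a b ↔ ((e a : ℕ) + 1 = (e b : ℕ) ∨ (e b : ℕ) + 1 = (e a : ℕ))

/-- The vertex set of a connected component, as a set of vertices. -/
def compSupp {V : Type*} (G : SimpleGraph V) (c : G.ConnectedComponent) : Set V :=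
  {v | G.connectedComponentMk v = c}

end

noncomputable section

/-- A graph is a cycle graph of length `l` if its vertices can be arranged in a
cyclic order `v_1, …, v_l` so that its edges are exactly the consecutive ones
(indices mod `l`). -/
def IsCycleGraphOfLength {V : Type*} (H : SimpleGraph V) (l : ℕ) : Prop :=
  ∃ e : V ≃ Fin l, ∀ a b : V,
    H.Adj a b ↔ (((e a : ℕ) + 1) % l = (e b : ℕ) ∨ ((e b : ℕ) + 1) % l = (e a : ℕ))

/-!
For `S ⊆ V`, let `c(S)` be the number of connected components of `G - S`. The prime `P_S(G)`,
generated by the variables at `S` and the `2 × 2` minors of the column blocks given by these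
components, contains `J_G`, and by Krull's height theorem its height is at most `|V| + |S| - c(S)`.
If `G` is connected, the ideal `P_∅(G)` of all `2 × 2` minors is a minimal prime of `J_G`, and
merging the columns into one block, one column at a time, gives a chain of primes of length
`|V| - 1` below it. So if `J_G` is unmixed, then `c(S) ≤ |S| + 1`.

In a connected unicyclic graph every edge off the cycle is a bridge. By the bound `c({v}) ≤ 2`, a
vertex incident to two bridges has no further neighbours. After removing the edges of the cycle,
every vertex therefore has degree at most two, and at most one if it lies on the cycle; the
components of what remains are paths, each with exactly one vertex, an endpoint, on the cycle.
-/

section Algebra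

variable {K : Type*} [Field K] {V ι κ : Type*}

lemma htI_eq_height {R : Type*} [CommRing R] (I : Ideal R) : htI I = I.height := by
  refine le_antisymm ?_ (le_iInf₂ fun P hP => ?_)
  · rw [Ideal.height_eq_inf_minimalPrimes]
    refine le_iInf₂ fun P hP => ?_
    have : P.IsPrime := hP.1.1
    rw [PrimeSpectrum.height_eq_orderHeight ⟨P, this⟩]
    exact iInf₂_le (⟨P, this⟩ : PrimeSpectrum R) hP.1.2
  · rw [← PrimeSpectrum.height_eq_orderHeight]
    exact Ideal.height_mono hP

/-- The binomial `f_{ij} = x_i y_j - x_j y_i`, for an arbitrary pair of indices. -/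
def edgeBinomial (K : Type*) [Field K] (i j : V) : MvPolynomial (V ⊕ V) K :=
  X (Sum.inl i) * X (Sum.inr j) - X (Sum.inl j) * X (Sum.inr i)

/-- The parametrization of the variety of `2 × V` matrices with columns `t_i • (1, b_c)` for
`i` labelled by `c`, and zero columns for `i` without label (`ρ i = none`). -/
def blockParam (K : Type*) [Field K] (ρ : V → Option ι) :
    MvPolynomial (V ⊕ V) K →ₐ[K] MvPolynomial (V ⊕ ι) K :=
  aeval (Sum.elim (fun i => (ρ i).elim 0 fun _ => X (Sum.inl i))
    fun i => (ρ i).elim 0 fun c => X (Sum.inl i) * X (Sum.inr c))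

/-- The prime ideal generated by the variables at the unlabelled indices and the binomials
`f_{ij}` of the pairs with equal labels. When `ρ` labels the vertices outside `S` by their
connected components in `G - S`, this is the prime usually denoted `P_S(G)`. It is defined as a
kernel, so that primality is immediate. -/
def blockIdeal (K : Type*) [Field K] (ρ : V → Option ι) : Ideal (MvPolynomial (V ⊕ V) K) :=
  RingHom.ker (blockParam K ρ)

instance (ρ : V → Option ι) : (blockIdeal K ρ).IsPrime :=
  RingHom.ker_isPrime _

lemma X_inl_mem_blockIdeal_iff {ρ : V → Option ι} {i : V} :
    X (Sum.inl i) ∈ blockIdeal K ρ ↔ ρ i = none := by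
  cases hi : ρ i <;> simp [blockIdeal, RingHom.mem_ker, blockParam, hi]

lemma X_inr_mem_blockIdeal {ρ : V → Option ι} {i : V} (hi : ρ i = none) :
    X (Sum.inr i) ∈ blockIdeal K ρ := by
  simp [blockIdeal, RingHom.mem_ker, blockParam, hi]

lemma edgeBinomial_mem_blockIdeal_iff {ρ : V → Option ι} {i j : V} :
    edgeBinomial K i j ∈ blockIdeal K ρ ↔ ρ i = none ∨ ρ j = none ∨ ρ i = ρ j := by
  simp only [blockIdeal, RingHom.mem_ker, blockParam, edgeBinomial, map_sub, map_mul, aeval_X,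
    Sum.elim_inl, Sum.elim_inr]
  cases ρ i with
  | none => simp
  | some c =>
    cases ρ j with
    | none => simp
    | some d =>
      have factor : (X (Sum.inl i) * (X (Sum.inl j) * X (Sum.inr d)) -
          X (Sum.inl j) * (X (Sum.inl i) * X (Sum.inr c)) : MvPolynomial (V ⊕ ι) K) =
          X (Sum.inl i) * X (Sum.inl j) * (X (Sum.inr d) - X (Sum.inr c)) := by ring
      simp [factor, sub_eq_zero, X_inj, @eq_comm _ d c]

lemma binomialEdgeIdeal_le_blockIdeal {G : SimpleGraph V} {ρ : V → Option ι}
    (h : ∀ i j, G.Adj i j → ρ i = none ∨ ρ j = none ∨ ρ i = ρ j) :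
    binomialEdgeIdeal K G ≤ blockIdeal K ρ := by
  refine Ideal.span_le.mpr ?_
  rintro _ ⟨i, j, hij, rfl⟩
  exact edgeBinomial_mem_blockIdeal_iff.mpr (h i j hij)

lemma blockIdeal_le_blockIdeal_map (ρ : V → Option ι) (σ : ι → κ) :
    blockIdeal K ρ ≤ blockIdeal K fun i => (ρ i).map σ := by
  have factor : blockParam K (fun i => (ρ i).map σ) =
      (rename (Sum.map id σ)).comp (blockParam K ρ) := by
    refine algHom_ext fun s => ?_
    rcases s with i | i <;> cases hi : ρ i <;> simp [blockParam, hi]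
  intro f hf
  rw [blockIdeal, RingHom.mem_ker] at hf ⊢
  rw [factor, AlgHom.comp_apply, hf, map_zero]

/-- Modulo such a prime `P` the parametrization can be inverted: put `b_c = y_{r c} / x_{r c}` in
the fraction field of `S / P`. -/
lemma blockIdeal_le_of_isPrime {ρ : V → Option ι} {r : ι → V} (hr : ∀ c, ρ (r c) = some c)
    {P : Ideal (MvPolynomial (V ⊕ V) K)} [P.IsPrime] (hP : P ≤ blockIdeal K ρ)
    (hx : ∀ i, ρ i = none → X (Sum.inl i) ∈ P) (hy : ∀ i, ρ i = none → X (Sum.inr i) ∈ P)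
    (hf : ∀ i c, ρ i = some c → edgeBinomial K (r c) i ∈ P) :
    blockIdeal K ρ ≤ P := by
  let L := FractionRing (MvPolynomial (V ⊕ V) K ⧸ P)
  let q : MvPolynomial (V ⊕ V) K →ₐ[K] L :=
    (IsScalarTower.toAlgHom K (MvPolynomial (V ⊕ V) K ⧸ P) L).comp (Ideal.Quotient.mkₐ K P)
  have q_eq_zero_iff (f) : q f = 0 ↔ f ∈ P := by
    simp only [q, AlgHom.comp_apply, IsScalarTower.coe_toAlgHom', Ideal.Quotient.mkₐ_eq_mk]
    rw [FaithfulSMul.algebraMap_eq_zero_iff, Ideal.Quotient.eq_zero_iff_mem]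
  let ψ : MvPolynomial (V ⊕ ι) K →ₐ[K] L :=
    aeval (Sum.elim (fun i => q (X (Sum.inl i)))
      fun c => q (X (Sum.inr (r c))) / q (X (Sum.inl (r c))))
  have factor : q = ψ.comp (blockParam K ρ) := by
    refine algHom_ext fun s => ?_
    rcases s with i | i <;> cases hi : ρ i with
    | none => simp [blockParam, hi, q_eq_zero_iff, hx, hy]
    | some c => ?_
    · simp [blockParam, hi, ψ]
    · have x_ne_zero : q (X (Sum.inl (r c))) ≠ 0 := fun h => by
        simpa [hr] using X_inl_mem_blockIdeal_iff.mp (hP ((q_eq_zero_iff _).mp h))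
      have minor : q (edgeBinomial K (r c) i) = 0 := (q_eq_zero_iff _).mpr (hf i c hi)
      rw [edgeBinomial, map_sub, map_mul, map_mul] at minor
      simp only [blockParam, hi, ψ, AlgHom.comp_apply, aeval_X, Sum.elim_inr, Sum.elim_inl,
        Option.elim_some, map_mul]
      rw [mul_div_assoc', eq_div_iff x_ne_zero]
      linear_combination minor
  intro f hf
  rw [← q_eq_zero_iff, factor, AlgHom.comp_apply, RingHom.mem_ker.mp hf, map_zero]

/-- Krull's height theorem: with `S = {i | ρ i = none}`, the prime is minimal over the `2 |S|`
variables at `S` and the `|V| - |S| - |ι|` binomials joining `r c` to the other indices labelled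
`c`. -/
lemma height_blockIdeal_add_card_le [Finite V] {ρ : V → Option ι} {r : ι → V}
    (hr : ∀ c, ρ (r c) = some c) :
    (blockIdeal K ρ).height + Nat.card ι ≤ Nat.card V + {i | ρ i = none}.ncard := by
  let S : Set V := {i | ρ i = none}
  let g (i : V) : MvPolynomial (V ⊕ V) K :=
    (ρ i).elim (X (Sum.inr i)) fun c => edgeBinomial K (r c) i
  let s : Set (MvPolynomial (V ⊕ V) K) := (fun i => X (Sum.inl i)) '' S ∪ g '' (Set.range r)ᶜ
  have r_injective : r.Injective := fun c d h => by simpa [hr] using congrArg ρ h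
  have card_s : s.ncard + Nat.card ι ≤ Nat.card V + S.ncard := by
    have h1 : s.ncard ≤ S.ncard + (Set.range r)ᶜ.ncard :=
      (Set.ncard_union_le _ _).trans (add_le_add (Set.ncard_image_le) (Set.ncard_image_le))
    have h2 := Set.ncard_add_ncard_compl (Set.range r)
    rw [Set.ncard_range_of_injective r_injective] at h2
    lia
  have minimal : blockIdeal K ρ ∈ (Ideal.span s).minimalPrimes := by
    refine ⟨⟨inferInstance, Ideal.span_le.mpr ?_⟩, ?_⟩
    · rintro _ (⟨i, hi, rfl⟩ | ⟨i, -, rfl⟩)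
      · exact X_inl_mem_blockIdeal_iff.mpr hi
      · cases hi : ρ i with
        | none => simpa [g, hi] using X_inr_mem_blockIdeal hi
        | some c => simp [g, hi, edgeBinomial_mem_blockIdeal_iff, hr]
    · rintro P ⟨hP, hsP⟩ hle
      have hg (i) (hi : i ∉ Set.range r) : g i ∈ P :=
        hsP (Ideal.subset_span (.inr (Set.mem_image_of_mem g hi)))
      refine blockIdeal_le_of_isPrime hr hle
        (fun i hi => hsP (Ideal.subset_span (.inl ⟨i, hi, rfl⟩))) (fun i hi => ?_) fun i c hi => ?_
      · simpa [g, hi] using hg i (by rintro ⟨c, rfl⟩; simp [hr] at hi)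
      · by_cases hir : i ∈ Set.range r
        · obtain ⟨d, rfl⟩ := hir
          obtain rfl : d = c := by simpa [hr] using hi
          simp [edgeBinomial]
        · simpa [g, hi] using hg i hir
  calc (blockIdeal K ρ).height + Nat.card ι ≤ s.ncard + Nat.card ι := by
        gcongr
        exact Ideal.height_le_card_of_mem_minimalPrimes_span s.toFinite minimal
    _ ≤ Nat.card V + S.ncard := by exact_mod_cast card_s

lemma edgeBinomial_mem_of_reachable {G : SimpleGraph V} {P : Ideal (MvPolynomial (V ⊕ V) K)}
    [P.IsPrime] (hP : binomialEdgeIdeal K G ≤ P) (hx : ∀ i, X (Sum.inl i) ∉ P) {i j : V}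
    (h : G.Reachable i j) : edgeBinomial K i j ∈ P := by
  obtain ⟨p⟩ := h
  induction p with
  | nil => simp [edgeBinomial]
  | @cons u v w huv _ ih =>
    have huv_mem : edgeBinomial K u v ∈ P := hP (Ideal.subset_span ⟨u, v, huv, rfl⟩)
    have plucker : X (Sum.inl v) * edgeBinomial K u w =
        X (Sum.inl u) * edgeBinomial K v w + X (Sum.inl w) * edgeBinomial K u v := by
      simp only [edgeBinomial]; ring
    refine (Ideal.IsPrime.mem_or_mem ‹P.IsPrime› ?_).resolve_left (hx v)
    rw [plucker]
    exact add_mem (P.mul_mem_left _ ih) (P.mul_mem_left _ huv_mem)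

lemma blockIdeal_const_mem_minimalPrimes {G : SimpleGraph V} (hG : G.Connected) :
    blockIdeal K (fun _ : V => some ()) ∈ (binomialEdgeIdeal K G).minimalPrimes := by
  refine ⟨⟨inferInstance, binomialEdgeIdeal_le_blockIdeal (by simp)⟩, ?_⟩
  rintro P ⟨hP, hJ⟩ hle
  have hx (i) : X (Sum.inl i) ∉ P := fun hi => by simpa using X_inl_mem_blockIdeal_iff.mp (hle hi)
  obtain ⟨o⟩ := hG.nonempty
  exact blockIdeal_le_of_isPrime (r := fun _ => o) (by simp) hle (by simp) (by simp)
    fun i _ _ => edgeBinomial_mem_of_reachable hJ hx (hG o i)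

lemma strictMono_blockIdeal_max [LinearOrder ι] {f : V → ι} (hf : f.Surjective) :
    StrictMono fun k => blockIdeal K fun i => some (max k (f i)) := by
  intro k l hkl
  obtain ⟨i, hi⟩ := hf k
  obtain ⟨j, hj⟩ := hf l
  refine lt_of_le_not_ge ?_ fun hle => ?_
  · have hle := blockIdeal_le_blockIdeal_map (K := K) (fun i => some (max k (f i))) (max l)
    simpa [← max_assoc, hkl.le] using hle
  · have hl : edgeBinomial K i j ∈ blockIdeal K fun i => some (max l (f i)) := by
      simp [edgeBinomial_mem_blockIdeal_iff, hi, hj, hkl.le]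
    exact hkl.ne (by simpa [edgeBinomial_mem_blockIdeal_iff, hi, hj, hkl.le] using hle hl)

lemma natCard_le_height_blockIdeal_const_add_one [Finite V] :
    Nat.card V ≤ (blockIdeal K fun _ : V => some ()).height + 1 := by
  obtain hV | ⟨m, hV⟩ : Nat.card V = 0 ∨ ∃ m, Nat.card V = m + 1 :=
    (Nat.card V).eq_zero_or_eq_succ_pred.imp_right fun h => ⟨_, h⟩
  · simp [hV]
  let e : V ≃ Fin (m + 1) := Finite.equivFinOfCardEq hV
  let chain : LTSeries (PrimeSpectrum (MvPolynomial (V ⊕ V) K)) :=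
    ⟨m, fun k => ⟨blockIdeal K fun i => some (max k (e i)), inferInstance⟩,
      fun k => strictMono_blockIdeal_max e.surjective k.castSucc_lt_succ⟩
  let minors : PrimeSpectrum (MvPolynomial (V ⊕ V) K) :=
    ⟨blockIdeal K fun _ => some (), inferInstance⟩
  have last_le : chain.last ≤ minors :=
    blockIdeal_le_blockIdeal_map (fun i => some (max (Fin.last m) (e i))) fun _ => ()
  rw [hV, Nat.cast_succ]
  gcongr
  exact (Order.length_le_height last_le).trans_eq (PrimeSpectrum.height_eq_orderHeight minors).symm

theorem card_connectedComponent_induce_compl_le [Finite V] {G : SimpleGraph V} (hG : G.Connected)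
    (hU : IsUnmixed (binomialEdgeIdeal K G)) (S : Set V) :
    Nat.card (G.induce Sᶜ).ConnectedComponent ≤ S.ncard + 1 := by
  classical
  let ρ (i : V) : Option (G.induce Sᶜ).ConnectedComponent :=
    if hi : i ∈ S then none else some ((G.induce Sᶜ).connectedComponentMk ⟨i, hi⟩)
  have hρ : {i | ρ i = none} = S := by ext i; simp [ρ]
  have hJ : binomialEdgeIdeal K G ≤ blockIdeal K ρ := by
    refine binomialEdgeIdeal_le_blockIdeal fun i j hij => ?_
    by_cases hi : i ∈ S
    · simp [ρ, hi]
    by_cases hj : j ∈ S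
    · simp [ρ, hj]
    have hij' : (G.induce Sᶜ).Adj ⟨i, hi⟩ ⟨j, hj⟩ := hij
    simp [ρ, hi, hj, hij'.reachable]
  have hr (c : (G.induce Sᶜ).ConnectedComponent) : ρ c.out = some c := by
    have hc : (c.out : V) ∉ S := c.out.2
    simp only [ρ, dif_neg hc, Subtype.coe_eta]
    exact congrArg some c.out_eq
  have minors_mem := blockIdeal_const_mem_minimalPrimes (K := K) hG
  have height_eq : (blockIdeal K fun _ : V => some ()).height =
      (binomialEdgeIdeal K G).height := by
    simpa only [htI_eq_height] using hU _ minors_mem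
  have bound : (Nat.card V + Nat.card (G.induce Sᶜ).ConnectedComponent : ℕ∞) ≤
      Nat.card V + (S.ncard + 1) :=
    calc (Nat.card V + Nat.card (G.induce Sᶜ).ConnectedComponent : ℕ∞)
        ≤ (blockIdeal K fun _ : V => some ()).height + 1 + Nat.card _ := by
          gcongr
          exact natCard_le_height_blockIdeal_const_add_one
      _ ≤ (blockIdeal K ρ).height + Nat.card _ + 1 := by
          rw [height_eq, add_right_comm]
          gcongr
      _ ≤ Nat.card V + (S.ncard + 1) := by
          rw [← add_assoc]
          refine add_le_add_left ?_ 1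
          simpa only [hρ] using height_blockIdeal_add_card_le (K := K) hr
  norm_cast at bound
  lia

end Algebra

section Bridges

open SimpleGraph

variable {V : Type*} {G H : SimpleGraph V}

lemma le_deleteEdges_singleton (hH : H ≤ G) {v a : V} (h : ¬ H.Adj v a) :
    H ≤ G.deleteEdges {s(v, a)} := by
  rw [← edgeSet_subset_edgeSet, edgeSet_deleteEdges]
  exact Set.subset_sdiff_singleton (edgeSet_mono hH) h

lemma not_reachable_induce_compl_of_isBridge {v a b : V} (ha : a ∈ ({v} : Set V)ᶜ)
    (hb : b ∈ ({v} : Set V)ᶜ) (hvb : G.Adj v b) (hab : a ≠ b) (h : G.IsBridge s(v, a)) :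
    ¬ (G.induce {v}ᶜ).Reachable ⟨a, ha⟩ ⟨b, hb⟩ := fun hreach => by
  let φ : G.induce {v}ᶜ →g G.deleteEdges {s(v, a)} :=
    ⟨Subtype.val, fun {i j} hij => by
      have hi := i.2
      have hj := j.2
      simp only [deleteEdges_adj, Set.mem_singleton_iff, Set.mem_compl_iff] at hi hj ⊢
      exact ⟨hij, by grind⟩⟩
  have hvb' : (G.deleteEdges {s(v, a)}).Adj v b := by
    simp only [deleteEdges_adj, Set.mem_singleton_iff]
    exact ⟨hvb, by grind⟩
  exact h (hvb'.reachable.trans (hreach.map φ).symm)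

lemma eq_or_eq_of_adj_of_isBridge [Finite V] {v a b c : V}
    (hv : Nat.card (G.induce {v}ᶜ).ConnectedComponent ≤ 2)
    (hva : G.Adj v a) (hvb : G.Adj v b) (hvc : G.Adj v c) (hab : a ≠ b)
    (ha : G.IsBridge s(v, a)) (hb : G.IsBridge s(v, b)) : c = a ∨ c = b := by
  have := Fintype.ofFinite (G.induce {v}ᶜ).ConnectedComponent
  by_contra! hc
  rw [Nat.card_eq_fintype_card, ← not_lt, Fintype.two_lt_card_iff] at hv
  refine hv ⟨connectedComponentMk _ ⟨a, hva.ne'⟩, connectedComponentMk _ ⟨b, hvb.ne'⟩,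
    connectedComponentMk _ ⟨c, hvc.ne'⟩, ?_, ?_, ?_⟩ <;> rw [Ne, ConnectedComponent.eq]
  · exact not_reachable_induce_compl_of_isBridge _ _ hvb hab ha
  · exact not_reachable_induce_compl_of_isBridge _ _ hvc hc.1.symm ha
  · exact not_reachable_induce_compl_of_isBridge _ _ hvc hc.2.symm hb

lemma ncard_neighborSet_le_two_of_isBridge [Finite V] (hH : H ≤ G)
    (hbridge : ∀ v a, H.Adj v a → G.IsBridge s(v, a)) {v : V}
    (hv : Nat.card (G.induce {v}ᶜ).ConnectedComponent ≤ 2) : (H.neighborSet v).ncard ≤ 2 := by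
  by_contra! h
  obtain ⟨a, b, c, ha, hb, hc, hab, hac, hbc⟩ := (Set.two_lt_ncard_iff (Set.toFinite _)).mp h
  exact (eq_or_eq_of_adj_of_isBridge hv (hH ha) (hH hb) (hH hc) hab (hbridge v a ha)
    (hbridge v b hb)).elim hac.symm hbc.symm

lemma ncard_neighborSet_le_one_of_isBridge [Finite V] (hH : H ≤ G)
    (hbridge : ∀ v a, H.Adj v a → G.IsBridge s(v, a)) {v c : V}
    (hv : Nat.card (G.induce {v}ᶜ).ConnectedComponent ≤ 2) (hvc : G.Adj v c)
    (hvc' : ¬ H.Adj v c) : (H.neighborSet v).ncard ≤ 1 := by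
  rw [Set.ncard_le_one_iff]
  intro a b ha hb
  by_contra hab
  obtain rfl | rfl := eq_or_eq_of_adj_of_isBridge hv (hH ha) (hH hb) hvc hab (hbridge v a ha)
    (hbridge v b hb)
  exacts [hvc' ha, hvc' hb]

end Bridges

section Unicyclic

open SimpleGraph

variable {V : Type*} [Finite V] {G H : SimpleGraph V}

lemma not_isAcyclic_of_ncard_edgeSet_eq (hG : G.Connected) (hE : G.edgeSet.ncard = Nat.card V) :
    ¬ G.IsAcyclic := fun h => by
  have hcard := (isTree_iff_connected_and_card.mp ⟨hG, h⟩).2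
  rw [Nat.card_coe_set_eq] at hcard
  lia

/-- Deleting the edge would leave a connected graph with `|V| - 1` edges, hence a tree. -/
lemma isBridge_of_not_isAcyclic_of_not_adj (hG : G.Connected)
    (hE : G.edgeSet.ncard = Nat.card V) (hHG : H ≤ G) (hH : ¬ H.IsAcyclic) {v a : V}
    (hva : G.Adj v a) (hva' : ¬ H.Adj v a) : G.IsBridge s(v, a) := by
  by_contra hbridge
  have hconn := hG.connected_delete_edge_of_not_isBridge hbridge
  have hcard : Nat.card (G.deleteEdges {s(v, a)}).edgeSet + 1 = Nat.card V := by
    rw [Nat.card_coe_set_eq, edgeSet_deleteEdges, ← hE,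
      Set.ncard_sdiff_singleton_add_one (G.mem_edgeSet.mpr hva)]
  exact hH ((isTree_iff_connected_and_card.mpr ⟨hconn, hcard⟩).isAcyclic.anti
    (le_deleteEdges_singleton hHG hva'))

end Unicyclic

section Cycle

open SimpleGraph

variable {V : Type*} {G : SimpleGraph V}

lemma exists_subgraph_iso_cycleGraph (hG : ¬ G.IsAcyclic) :
    ∃ l ≥ 3, ∃ C : G.Subgraph, Nonempty (cycleGraph l ≃g C.coe) := by
  rw [isAcyclic_iff_free_cycleGraph] at hG
  push Not at hG
  obtain ⟨l, hl, ⟨f⟩⟩ := hG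
  exact ⟨l, hl, f.toSubgraph, ⟨f.isoToSubgraph⟩⟩

variable {l : ℕ} {C : G.Subgraph}

lemma isCycleGraphOfLength_of_iso_cycleGraph {W : Type*} {H : SimpleGraph W} (hl : 3 ≤ l)
    (φ : cycleGraph l ≃g H) : IsCycleGraphOfLength H l := by
  obtain ⟨k, rfl⟩ : ∃ k, l = k + 2 := ⟨l - 2, by lia⟩
  refine ⟨φ.symm.toEquiv, fun a b => ?_⟩
  rw [← φ.symm.map_adj_iff, cycleGraph_adj, or_comm, sub_eq_iff_eq_add', sub_eq_iff_eq_add',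
    Fin.ext_iff, Fin.ext_iff, Fin.val_add, Fin.val_add, Fin.val_one]
  simp only [eq_comm, RelIso.coe_fn_toEquiv]

lemma not_isAcyclic_spanningCoe_of_iso_cycleGraph (hl : 3 ≤ l) (φ : cycleGraph l ≃g C.coe) :
    ¬ C.spanningCoe.IsAcyclic := fun h =>
  isAcyclic_iff_free_cycleGraph.mp h l hl
    ⟨(C.coeEmbeddingSpanningCoe.comp φ.toEmbedding).toCopy⟩

lemma connected_of_iso_cycleGraph (hl : 3 ≤ l) (φ : cycleGraph l ≃g C.coe) : C.Connected := by
  obtain ⟨k, rfl⟩ : ∃ k, l = k + 1 := ⟨l - 1, by lia⟩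
  exact ⟨φ.connected_iff.mp cycleGraph_connected⟩

lemma exists_adj_of_iso_cycleGraph (hl : 3 ≤ l) (φ : cycleGraph l ≃g C.coe) {z : V}
    (hz : z ∈ C.verts) : ∃ d, C.Adj z d := by
  have : Nontrivial (Fin l) := Fin.nontrivial_iff_two_le.mpr (by lia)
  have : Nontrivial C.verts := φ.symm.toEquiv.nontrivial
  exact (connected_of_iso_cycleGraph hl φ).preconnected.exists_adj_of_nontrivial ⟨z, hz⟩

end Cycle

section Path

open SimpleGraph

variable {W : Type*} {T : SimpleGraph W} {z : W}

lemma exists_adj_dist_eq_of_dist_eq_succ {w : W} {d : ℕ} (h : T.dist z w = d + 1) :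
    ∃ u, T.Adj u w ∧ T.dist z u = d := by
  obtain ⟨p, hp⟩ := exists_walk_of_dist_ne_zero (G := T) (u := z) (v := w) (by lia)
  have hnil : ¬ p.Nil := fun hn => by
    have := Walk.length_eq_zero_iff.mpr hn
    lia
  have hadj := p.adj_penultimate hnil
  refine ⟨p.penultimate, hadj, ?_⟩
  have upper := dist_le p.dropLast
  have lower := p.dropLast.reachable.dist_triangle_left w
  rw [dist_eq_one_iff_adj.mpr hadj] at lower
  have : p.dropLast.length = p.length - 1 := by simp
  lia

lemma exists_dist_eq_of_le {w : W} {d : ℕ} (hd : d ≤ T.dist z w) : ∃ u, T.dist z u = d := by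
  induction hd using Nat.decreasingInduction with
  | self => exact ⟨w, rfl⟩
  | of_succ k _ ih =>
    obtain ⟨u, hu⟩ := ih
    obtain ⟨t, -, ht⟩ := exists_adj_dist_eq_of_dist_eq_succ hu
    exact ⟨t, ht⟩

variable [Finite W]

lemma injective_dist (hT : T.Connected) (hz : (T.neighborSet z).ncard ≤ 1)
    (hdeg : ∀ w, (T.neighborSet w).ncard ≤ 2) : Function.Injective (T.dist z) := by
  suffices h : ∀ d u w, T.dist z u = d → T.dist z w = d → u = w from fun u w huw => h _ u w huw rfl
  intro d
  induction d with
  | zero =>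
    intro u w hu hw
    rw [← hT.dist_eq_zero_iff.mp hu, hT.dist_eq_zero_iff.mp hw]
  | succ d ih =>
    intro u w hu hw
    obtain ⟨u', huu', hu'⟩ := exists_adj_dist_eq_of_dist_eq_succ hu
    obtain ⟨w', hww', hw'⟩ := exists_adj_dist_eq_of_dist_eq_succ hw
    obtain rfl := ih u' w' hu' hw'
    obtain _ | d := d
    · obtain rfl := hT.dist_eq_zero_iff.mp hu'
      exact (Set.ncard_le_one_iff (Set.toFinite _)).mp hz huu' hww'
    · obtain ⟨t, htu', ht⟩ := exists_adj_dist_eq_of_dist_eq_succ hu'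
      have h := (hdeg u').not_gt
      rw [Set.two_lt_ncard_iff (Set.toFinite _)] at h
      push Not at h
      have htu : t ≠ u := by rintro rfl; lia
      have htw : t ≠ w := by rintro rfl; lia
      exact h t u w htu'.symm huu' hww' htu htw

lemma isPathGraph_of_ncard_neighborSet_le_two (hT : T.Connected)
    (hz : (T.neighborSet z).ncard ≤ 1) (hdeg : ∀ w, (T.neighborSet w).ncard ≤ 2) :
    IsPathGraph T := by
  have inj := injective_dist hT hz hdeg
  have : Nonempty W := ⟨z⟩
  obtain ⟨w, hw⟩ := Finite.exists_max (T.dist z)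
  let e : W ≃ Fin (T.dist z w + 1) :=
    Equiv.ofBijective (fun u => ⟨T.dist z u, Nat.lt_succ_of_le (hw u)⟩)
      ⟨fun u v h => inj (congrArg Fin.val h), fun d =>
        (exists_dist_eq_of_le (Nat.le_of_lt_succ d.2)).imp fun u hu => Fin.ext hu⟩
  have adj_of_dist {a b : W} (h : T.dist z a + 1 = T.dist z b) : T.Adj a b := by
    obtain ⟨u, hub, hu⟩ := exists_adj_dist_eq_of_dist_eq_succ h.symm
    rwa [inj hu] at hub
  refine ⟨T.dist z w + 1, e, fun a b => ?_⟩
  change T.Adj a b ↔ T.dist z a + 1 = T.dist z b ∨ T.dist z b + 1 = T.dist z a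
  refine ⟨fun h => ?_, fun h => h.elim adj_of_dist fun h => (adj_of_dist h).symm⟩
  have hne : T.dist z a ≠ T.dist z b := inj.ne h.ne
  have := h.diff_dist_adj (u := z)
  lia

end Path

section Components

open SimpleGraph

variable {V : Type*} {G H : SimpleGraph V}

/-- The connected component of `z` in a spanning subgraph `H ≤ G`, as a subgraph of `G`. -/
def componentSubgraph (hH : H ≤ G) (z : V) : G.Subgraph :=
  (toSubgraph H hH).induce (H.connectedComponentMk z).supp

lemma mem_verts_componentSubgraph {hH : H ≤ G} {z w : V} :
    w ∈ (componentSubgraph hH z).verts ↔ H.Reachable w z := by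
  simp [componentSubgraph]

lemma coe_componentSubgraph (hH : H ≤ G) (z : V) :
    (componentSubgraph hH z).coe = (H.connectedComponentMk z).toSimpleGraph := by
  ext a b
  exact ⟨fun h => h.2.2, fun h => ⟨a.2, b.2, h⟩⟩

lemma isPathGraph_coe_componentSubgraph [Finite V] (hH : H ≤ G) {z : V}
    (hz : (H.neighborSet z).ncard ≤ 1) (hdeg : ∀ w, (H.neighborSet w).ncard ≤ 2) :
    IsPathGraph (componentSubgraph hH z).coe := by
  rw [coe_componentSubgraph]
  let c := H.connectedComponentMk z
  have ncard_le (w : c) : (c.toSimpleGraph.neighborSet w).ncard ≤ (H.neighborSet w).ncard :=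
    Set.ncard_le_ncard_of_injOn Subtype.val (fun _ h => h) Subtype.val_injective.injOn
  exact isPathGraph_of_ncard_neighborSet_le_two (z := ⟨z, rfl⟩) c.connected_toSimpleGraph
    ((ncard_le _).trans hz) fun w => (ncard_le w).trans (hdeg w)

lemma disjoint_verts_componentSubgraph {hH : H ≤ G} {z w : V} (h : ¬ H.Reachable z w) :
    Disjoint (componentSubgraph hH z).verts (componentSubgraph hH w).verts := by
  refine Set.disjoint_left.mpr fun v hz hw => h ?_
  rw [mem_verts_componentSubgraph] at hz hw
  exact hz.symm.trans hw

variable {C : G.Subgraph}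

lemma eq_of_reachable_of_isBridge (hC : C.Connected) (hHC : Disjoint H C.spanningCoe)
    (hH : H ≤ G) (hbridge : ∀ v a, H.Adj v a → G.IsBridge s(v, a)) {z w : V} (hz : z ∈ C.verts)
    (hw : w ∈ C.verts) (h : H.Reachable z w) : z = w := by
  obtain ⟨p, hp⟩ := h.exists_isPath
  cases p with
  | nil => rfl
  | @cons _ x _ hzx p =>
    refine (hbridge z x hzx ?_).elim
    have via_H : (G.deleteEdges {s(z, x)}).Reachable x w := by
      have hzx_notMem : s(z, x) ∉ p.edges := fun h =>
        ((Walk.cons_isPath_iff _ _).mp hp).2 (p.fst_mem_support_of_mem_edges h)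
      exact (p.toDeleteEdge _ hzx_notMem).reachable.mono (deleteEdges_mono hH)
    have via_C : (G.deleteEdges {s(z, x)}).Reachable z w := by
      have hle : C.spanningCoe ≤ G.deleteEdges {s(z, x)} :=
        le_deleteEdges_singleton C.spanningCoe_le (disjoint_left.mp hHC z x hzx)
      let φ : C.coe →g G.deleteEdges {s(z, x)} := ⟨Subtype.val, fun h => hle h⟩
      exact (hC.coe ⟨z, hz⟩ ⟨w, hw⟩).map φ
    exact via_C.trans via_H.symm

lemma exists_reachable_of_spanningCoe_sup_eq (hG : G.Connected) (hHC : H ⊔ C.spanningCoe = G)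
    (hC : C.verts.Nonempty) (w : V) : ∃ z ∈ C.verts, H.Reachable w z := by
  obtain ⟨u, hu⟩ := hC
  obtain ⟨p⟩ := hG w u
  induction p with
  | nil => exact ⟨_, hu, .rfl⟩
  | @cons x y _ hxy p ih =>
    rw [← hHC] at hxy
    obtain hxy | hxy := hxy
    · obtain ⟨z, hz, hyz⟩ := ih hu
      exact ⟨z, hz, hxy.reachable.trans hyz⟩
    · exact ⟨x, C.edge_vert hxy, .rfl⟩

lemma sup_iSup_componentSubgraph_eq_top {ι : Type*} {hH : H ≤ G} (hHC : H ⊔ C.spanningCoe = G)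
    {f : ι → V} (hf : ∀ w, ∃ i, H.Reachable w (f i)) :
    C ⊔ ⨆ i, componentSubgraph hH (f i) = ⊤ := by
  refine top_le_iff.mp ⟨fun w _ => ?_, fun a b hab => ?_⟩
  · obtain ⟨i, hi⟩ := hf w
    rw [Subgraph.verts_sup, Subgraph.verts_iSup]
    exact .inr (Set.mem_iUnion.mpr ⟨i, mem_verts_componentSubgraph.mpr hi⟩)
  · rw [Subgraph.top_adj, ← hHC] at hab
    rw [Subgraph.sup_adj, Subgraph.iSup_adj]
    obtain hab | hab := hab
    · obtain ⟨i, hi⟩ := hf a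
      have hi' : H.Reachable b (f i) := hab.symm.reachable.trans hi
      exact .inr ⟨i, by simpa [componentSubgraph] using ⟨hi, hi', hab⟩⟩
    · exact .inl hab

end Components

section Decomposition

open SimpleGraph

theorem exists_cycle_sup_paths_eq_top_of_card_connectedComponent_le_two {V : Type*} [Finite V]
    {G : SimpleGraph V} (hG : G.Connected) (hE : G.edgeSet.ncard = Nat.card V)
    (hcut : ∀ v, Nat.card (G.induce {v}ᶜ).ConnectedComponent ≤ 2) :
    ∃ l ≥ 3, ∃ (C : G.Subgraph) (P : Fin l → G.Subgraph),
      IsCycleGraphOfLength C.coe l ∧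
      (∀ i, IsPathGraph (P i).coe) ∧
      (∀ i, ((P i).verts ∩ C.verts).ncard = 1) ∧
      (∀ i j, i ≠ j → (P i).verts ∩ (P j).verts = ∅) ∧
      C ⊔ (⨆ i, P i) = ⊤ := by
  obtain ⟨l, hl, C, ⟨φ⟩⟩ :=
    exists_subgraph_iso_cycleGraph (not_isAcyclic_of_ncard_edgeSet_eq hG hE)
  have hC := connected_of_iso_cycleGraph hl φ
  let H := G \ C.spanningCoe
  have hH : H ≤ G := sdiff_le
  have hHC : H ⊔ C.spanningCoe = G := sdiff_sup_cancel C.spanningCoe_le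
  have hbridge (v a) (h : H.Adj v a) : G.IsBridge s(v, a) :=
    isBridge_of_not_isAcyclic_of_not_adj hG hE C.spanningCoe_le
      (not_isAcyclic_spanningCoe_of_iso_cycleGraph hl φ) h.1 h.2
  have hsep {z w} (hz : z ∈ C.verts) (hw : w ∈ C.verts) : H.Reachable z w → z = w :=
    eq_of_reachable_of_isBridge hC disjoint_sdiff_self_left hH hbridge hz hw
  refine ⟨l, hl, C, fun i => componentSubgraph hH (φ i),
    isCycleGraphOfLength_of_iso_cycleGraph hl φ, fun i => ?_, fun i => ?_, fun i j hij => ?_, ?_⟩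
  · obtain ⟨d, hd⟩ := exists_adj_of_iso_cycleGraph hl φ (φ i).2
    exact isPathGraph_coe_componentSubgraph hH
      (ncard_neighborSet_le_one_of_isBridge hH hbridge (hcut _) hd.adj_sub fun h => h.2 hd)
      fun w => ncard_neighborSet_le_two_of_isBridge hH hbridge (hcut w)
  · rw [Set.ncard_eq_one]
    refine ⟨φ i, Set.eq_singleton_iff_unique_mem.mpr
      ⟨⟨mem_verts_componentSubgraph.mpr .rfl, (φ i).2⟩, fun w hw => ?_⟩⟩
    exact hsep hw.2 (φ i).2 (mem_verts_componentSubgraph.mp hw.1)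
  · refine (disjoint_verts_componentSubgraph fun h => hij ?_).inter_eq
    exact φ.injective (Subtype.ext (hsep (φ i).2 (φ j).2 h))
  · refine sup_iSup_componentSubgraph_eq_top hHC fun w => ?_
    obtain ⟨z, hz, hwz⟩ := exists_reachable_of_spanningCoe_sup_eq hG hHC hC.nonempty w
    exact ⟨φ.symm ⟨z, hz⟩, by simpa using hwz⟩

end Decomposition

theorem binomialEdgeIdeal_unmixed_unicyclic_structure_general {V : Type*} [Finite V]
    (K : Type*) [Field K] {G : SimpleGraph V} (hConn : G.Connected)
    (hUni : G.edgeSet.ncard = Nat.card V) (hUnmixed : IsUnmixed (binomialEdgeIdeal K G)) :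
    ∃ (l r : ℕ), 3 ≤ l ∧ r ≤ l ∧
      ∃ (C : G.Subgraph) (P : Fin r → G.Subgraph),
        IsCycleGraphOfLength C.coe l ∧
        (∀ i, IsPathGraph (P i).coe) ∧
        (∀ i, ((P i).verts ∩ C.verts).ncard = 1) ∧
        (∀ i j, i ≠ j → (P i).verts ∩ (P j).verts = ∅) ∧
        C ⊔ (⨆ i, P i) = ⊤ := by
  have hcut (v) : Nat.card (G.induce {v}ᶜ).ConnectedComponent ≤ 2 := by
    simpa using card_connectedComponent_induce_compl_le hConn hUnmixed {v}
  obtain ⟨l, hl, C, P, hC⟩ :=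
    exists_cycle_sup_paths_eq_top_of_card_connectedComponent_le_two hConn hUni hcut
  exact ⟨l, l, hl, le_rfl, C, P, hC⟩

/-- Let `G` be a connected unicyclic graph such that `J_G` is
unmixed. Then `G = C_l ∪ (P_1 ∪ ⋯ ∪ P_r)` for some `0 ≤ r ≤ l`, where `C_l` is a
cycle of length `l`, each `P_i` is a path graph meeting `C_l` in exactly one
vertex, and the `P_i` are pairwise vertex-disjoint. -/
theorem binomialEdgeIdeal_unmixed_unicyclic_structure
    (K : Type*) [Field K] (n : ℕ) (G : SimpleGraph (Fin n))
    (hConn : G.Connected) (hUni : G.edgeSet.ncard = n)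
    (hUnmixed : IsUnmixed (binomialEdgeIdeal K G)) :
    ∃ (l r : ℕ), 3 ≤ l ∧ r ≤ l ∧
      ∃ (C : G.Subgraph) (P : Fin r → G.Subgraph),
        IsCycleGraphOfLength C.coe l ∧
        (∀ i, IsPathGraph (P i).coe) ∧
        (∀ i, ((P i).verts ∩ C.verts).ncard = 1) ∧
        (∀ i j, i ≠ j → (P i).verts ∩ (P j).verts = ∅) ∧
        C ⊔ (⨆ i, P i) = ⊤ := by
  exact binomialEdgeIdeal_unmixed_unicyclic_structure_general K hConn
    (by simpa using hUni) hUnmixed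

end
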